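/- Let (R,S,P,Q,φ,ψ) be a Morita context over k. Set P^e := P ⊗_k Q, an (S ⊗_k S^op, R ⊗_k R^op)-bimodule via (s ⊗ s̃^op)·(p ⊗ q)·(r ⊗ r̃^op) := (s·p·r) ⊗ (r̃·q·s̃), and Q^e := Q ⊗_k P, an (R ⊗_k R^op, S ⊗_k S^op)-bimodule via (r ⊗ r̃^op)·(q ⊗ p)·(s ⊗ s̃^op) := (r·q·s) ⊗ (s̃·p·r̃). Then the k-linear maps Φ : P^e ⊗_{R⊗R^op} Q^e → S ⊗_k S^op, (p ⊗ q) ⊗ (q' ⊗ p') ↦ φ(p ⊗ q') ⊗ φ(p' ⊗ q)^op, and Ψ : Q^e ⊗_{S⊗S^op} P^e → R ⊗_k R^op, (q ⊗ p) ⊗ (p' ⊗ q') ↦ ψ(q ⊗ p') ⊗ ψ(q' ⊗ p)^op, are well-defined bimodule isomorphisms; hence (R ⊗_k R^op, S ⊗_k S^op, P^e, Q^e, Φ, Ψ) is again a Morita context. -/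

import Mathlib

open scoped TensorProduct
open MulOpposite

universe u

/-- The `k`-submodule of balancing relations `(m·a) ⊗ n − m ⊗ (a·n)` inside `M ⊗[k] N`,
for a `k`-algebra `A`, a right `A`-module `M` and a left `A`-module `N`.  The balanced
tensor product `M ⊗_A N` is the quotient of `M ⊗[k] N` by this submodule. -/
def midRel (k A M N : Type u) [CommRing k] [Ring A] [Algebra k A]
    [AddCommGroup M] [Module k M] [Module Aᵐᵒᵖ M]
    [AddCommGroup N] [Module k N] [Module A N] :
    Submodule k (TensorProduct k M N) :=
  Submodule.span k {x | ∃ (m : M) (a : A) (n : N),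
    x = (op a • m) ⊗ₜ[k] n - m ⊗ₜ[k] (a • n)}

/-- A Morita context `(R, S, P, Q, φ, ψ)` over the commutative ground ring `k`:
`P` is an `(S,R)`-bimodule and `Q` an `(R,S)`-bimodule (both with symmetric `k`-action,
right actions being encoded as left actions of the opposite algebras), and `φ` and `ψ` are
`k`-bilinear pairings `P × Q → S` and `Q × P → R` which descend to bimodule isomorphisms
`φ : P ⊗_R Q ≅ S` and `ψ : Q ⊗_S P ≅ R` on the balanced tensor products:  the lifted maps on
`P ⊗[k] Q` resp. `Q ⊗[k] P` are surjective and their kernels are exactly the corresponding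
submodules of balancing relations (so that the induced maps on the quotients realizing
`P ⊗_R Q` and `Q ⊗_S P` are well defined bijections); moreover the compatibilities
`φ(p ⊗ q)·p' = p·ψ(q ⊗ p')` and `ψ(q ⊗ p)·q' = q·φ(p ⊗ q')` hold. -/
structure MoritaContext (k R S P Q : Type u) [CommRing k] [Ring R] [Ring S]
    [Algebra k R] [Algebra k S]
    [AddCommGroup P] [Module k P] [Module S P] [Module Rᵐᵒᵖ P]
    [SMulCommClass S Rᵐᵒᵖ P] [IsScalarTower k S P] [IsScalarTower k Rᵐᵒᵖ P]
    [AddCommGroup Q] [Module k Q] [Module R Q] [Module Sᵐᵒᵖ Q]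
    [SMulCommClass R Sᵐᵒᵖ Q] [IsScalarTower k R Q] [IsScalarTower k Sᵐᵒᵖ Q] : Type u where
  φ : P →ₗ[k] Q →ₗ[k] S
  ψ : Q →ₗ[k] P →ₗ[k] R
  φ_ker : LinearMap.ker (TensorProduct.lift φ) = midRel k R P Q
  φ_surj : Function.Surjective (TensorProduct.lift φ)
  ψ_ker : LinearMap.ker (TensorProduct.lift ψ) = midRel k S Q P
  ψ_surj : Function.Surjective (TensorProduct.lift ψ)
  φ_left : ∀ (s : S) (p : P) (q : Q), φ (s • p) q = s * φ p q
  φ_right : ∀ (s : S) (p : P) (q : Q), φ p (op s • q) = φ p q * s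
  ψ_left : ∀ (r : R) (q : Q) (p : P), ψ (r • q) p = r * ψ q p
  ψ_right : ∀ (r : R) (q : Q) (p : P), ψ q (op r • p) = ψ q p * r
  assoc_φψ : ∀ (p : P) (q : Q) (p' : P), φ p q • p' = op (ψ q p') • p
  assoc_ψφ : ∀ (q : Q) (p : P) (q' : Q), ψ q p • q' = op (φ p q') • q


section BaseChange

variable (k : Type u) [CommRing k]

/-- The map `Φ : P^e ⊗ Q^e → S ⊗_k S^op`, `(p ⊗ q) ⊗ (q' ⊗ p') ↦ φ(p ⊗ q') ⊗ φ(p' ⊗ q)^op`,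
where `P^e = P ⊗_k Q^op` and `Q^e = Q ⊗_k P^op` are realized as `P ⊗[k] Q` and `Q ⊗[k] P`. -/
noncomputable def PhiMap {S P Q : Type u} [Ring S] [Algebra k S]
    [AddCommGroup P] [Module k P] [AddCommGroup Q] [Module k Q]
    (φ : P →ₗ[k] Q →ₗ[k] S) :
    (P ⊗[k] Q) ⊗[k] (Q ⊗[k] P) →ₗ[k] S ⊗[k] Sᵐᵒᵖ :=
  (TensorProduct.map (TensorProduct.lift φ)
      ((MulOpposite.opLinearEquiv k).toLinearMap ∘ₗ TensorProduct.lift φ ∘ₗ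
        (TensorProduct.comm k Q P).toLinearMap)) ∘ₗ
    (TensorProduct.tensorTensorTensorComm k P Q Q P).toLinearMap

/-- The submodule of balancing relations for the tensor product `P^e ⊗_{R^e} Q^e`, where
`R^e = R ⊗_k R^op` acts on the right of `P^e = P ⊗_k Q^op` by
`(p ⊗ q)·(r ⊗ r̃^op) = (p·r) ⊗ (r̃·q)` and on the left of `Q^e = Q ⊗_k P^op` by
`(r ⊗ r̃^op)·(q ⊗ p) = (r·q) ⊗ (p·r̃)`. -/
def relPeQe {R P Q : Type u} [Ring R] [Algebra k R]
    [AddCommGroup P] [Module k P] [Module Rᵐᵒᵖ P]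
    [AddCommGroup Q] [Module k Q] [Module R Q] :
    Submodule k ((P ⊗[k] Q) ⊗[k] (Q ⊗[k] P)) :=
  Submodule.span k
    {x | ∃ (r r' : R) (p : P) (q : Q) (q₂ : Q) (p₂ : P),
      x = ((op r • p) ⊗ₜ[k] (r' • q)) ⊗ₜ[k] (q₂ ⊗ₜ[k] p₂)
          - (p ⊗ₜ[k] q) ⊗ₜ[k] ((r • q₂) ⊗ₜ[k] (op r' • p₂))}

end BaseChange

theorem PhiMap_tmul (k : Type u) [CommRing k] {S P Q : Type u} [Ring S] [Algebra k S]
    [AddCommGroup P] [Module k P] [AddCommGroup Q] [Module k Q]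
    (φ : P →ₗ[k] Q →ₗ[k] S) (p : P) (q : Q) (q' : Q) (p' : P) :
    PhiMap k φ ((p ⊗ₜ[k] q) ⊗ₜ[k] (q' ⊗ₜ[k] p')) = φ p q' ⊗ₜ[k] op (φ p' q) := by
  simp [PhiMap]

theorem PhiMap_surj (k : Type u) [CommRing k] {S P Q : Type u} [Ring S] [Algebra k S]
    [AddCommGroup P] [Module k P] [AddCommGroup Q] [Module k Q]
    (φ : P →ₗ[k] Q →ₗ[k] S) (h : Function.Surjective (TensorProduct.lift φ)) :
    Function.Surjective (PhiMap k φ) := by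
  unfold PhiMap
  rw [LinearMap.coe_comp]
  refine Function.Surjective.comp (TensorProduct.map_surjective h ?_) (LinearEquiv.surjective _)
  rw [LinearMap.coe_comp, LinearMap.coe_comp]
  exact (LinearEquiv.surjective _).comp (h.comp (LinearEquiv.surjective _))

theorem PhiMap_ker (k : Type u) [CommRing k] {R S P Q : Type u} [Ring R] [Algebra k R]
    [Ring S] [Algebra k S]
    [AddCommGroup P] [Module k P] [Module Rᵐᵒᵖ P] [AddCommGroup Q] [Module k Q] [Module R Q]
    (φ : P →ₗ[k] Q →ₗ[k] S) (h : Function.Surjective (TensorProduct.lift φ))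
    (hk : LinearMap.ker (TensorProduct.lift φ) = midRel k R P Q) :
    LinearMap.ker (PhiMap k φ) = relPeQe (k := k) (R := R) (P := P) (Q := Q) := by
  have bal : ∀ (r : R) (p : P) (q : Q), φ (op r • p) q = φ p (r • q) := by
    intro r p q
    have : (op r • p) ⊗ₜ[k] q - p ⊗ₜ[k] (r • q) ∈ LinearMap.ker (TensorProduct.lift φ) := by
      rw [hk]; exact Submodule.subset_span ⟨p, r, q, rfl⟩
    simpa [sub_eq_zero] using this
  have A : ∀ u ∈ midRel k R P Q, ∀ y : Q ⊗[k] P,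
      (TensorProduct.tensorTensorTensorComm k P Q Q P).symm (u ⊗ₜ[k] y) ∈
        relPeQe (k := k) (R := R) (P := P) (Q := Q) := by
    intro u hu y
    induction hu using Submodule.span_induction with
    | mem x hx =>
      obtain ⟨p, r, q₂, rfl⟩ := hx
      induction y with
      | zero => simp
      | add a b ha hb => rw [TensorProduct.tmul_add, map_add]; exact add_mem ha hb
      | tmul q p₂ =>
        refine Submodule.subset_span ⟨r, 1, p, q, q₂, p₂, ?_⟩
        simp [TensorProduct.sub_tmul]
    | zero => simp
    | add a b _ _ ha hb => rw [TensorProduct.add_tmul, map_add]; exact add_mem ha hb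
    | smul c a _ ha =>
      rw [← TensorProduct.smul_tmul', map_smul]; exact Submodule.smul_mem _ _ ha
  have B : ∀ u ∈ midRel k R P Q, ∀ y : P ⊗[k] Q,
      (TensorProduct.tensorTensorTensorComm k P Q Q P).symm
        (y ⊗ₜ[k] (TensorProduct.comm k Q P).symm u) ∈
        relPeQe (k := k) (R := R) (P := P) (Q := Q) := by
    intro u hu y
    induction hu using Submodule.span_induction with
    | mem x hx =>
      obtain ⟨p₂, r, q, rfl⟩ := hx
      induction y with
      | zero => simp
      | add a b ha hb => rw [TensorProduct.add_tmul, map_add]; exact add_mem ha hb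
      | tmul p q₂ =>
        rw [← neg_mem_iff]
        refine Submodule.subset_span ⟨1, r, p, q, q₂, p₂, ?_⟩
        simp [TensorProduct.tmul_sub]
    | zero => simp
    | add a b _ _ ha hb => rw [map_add, TensorProduct.tmul_add, map_add]; exact add_mem ha hb
    | smul c a _ ha =>
      rw [map_smul, TensorProduct.tmul_smul, map_smul]; exact Submodule.smul_mem _ _ ha
  apply le_antisymm
  · intro x hx
    set g : Q ⊗[k] P →ₗ[k] Sᵐᵒᵖ :=
      ((MulOpposite.opLinearEquiv k).toLinearMap ∘ₗ TensorProduct.lift φ ∘ₗ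
        (TensorProduct.comm k Q P).toLinearMap) with hg
    have hgs : Function.Surjective g := by
      rw [hg, LinearMap.coe_comp, LinearMap.coe_comp]
      exact (LinearEquiv.surjective _).comp (h.comp (LinearEquiv.surjective _))
    have hz : TensorProduct.tensorTensorTensorComm k P Q Q P x ∈
        LinearMap.ker (TensorProduct.map (TensorProduct.lift φ) g) := hx
    rw [TensorProduct.map_ker (f := (LinearMap.ker (TensorProduct.lift φ)).subtype)
      (f' := (LinearMap.ker g).subtype) (LinearMap.exact_subtype_ker_map _) h
      (LinearMap.exact_subtype_ker_map _) hgs] at hz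
    have key : LinearMap.range (LinearMap.lTensor (P ⊗[k] Q) (LinearMap.ker g).subtype) ⊔
        LinearMap.range (LinearMap.rTensor (Q ⊗[k] P)
          (LinearMap.ker (TensorProduct.lift φ)).subtype) ≤
        (relPeQe (k := k) (R := R) (P := P) (Q := Q)).comap
          (TensorProduct.tensorTensorTensorComm k P Q Q P).symm.toLinearMap := by
      refine sup_le ?_ ?_
      · rintro _ ⟨w, rfl⟩
        induction w with
        | zero => simp
        | add a b ha hb => rw [map_add]; exact add_mem ha hb
        | tmul y v =>
          have hv : TensorProduct.comm k Q P v.1 ∈ midRel k R P Q := by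
            rw [← hk]
            have := v.2
            simpa [hg] using this
          have := B _ hv y
          rw [LinearEquiv.symm_apply_apply] at this
          exact this
      · rintro _ ⟨w, rfl⟩
        induction w with
        | zero => simp
        | add a b ha hb => rw [map_add]; exact add_mem ha hb
        | tmul v y => exact A v.1 (hk ▸ v.2) y
    have := key hz
    rwa [Submodule.mem_comap, LinearEquiv.coe_coe, LinearEquiv.symm_apply_apply] at this
  · refine Submodule.span_le.2 ?_
    rintro _ ⟨r, r', p, q, q₂, p₂, rfl⟩
    simp [PhiMap_tmul, bal]

/-- Let `(R, S, P, Q, φ, ψ)` be a Morita context over `k`.  Set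
`P^e := P ⊗_k Q^op`, an `(S ⊗_k S^op, R ⊗_k R^op)`-bimodule via
`(s ⊗ s̃^op)·(p ⊗ q)·(r ⊗ r̃^op) = (s·p·r) ⊗ (r̃·q·s̃)`, and `Q^e := Q ⊗_k P^op`, an
`(R ⊗_k R^op, S ⊗_k S^op)`-bimodule via `(r ⊗ r̃^op)·(q ⊗ p)·(s ⊗ s̃^op) = (r·q·s) ⊗ (s̃·p·r̃)`
(induced bimodule actions `lactSePe`, `ractRePe`, `lactReQe`, `ractSeQe` below).  Then the
maps `Φ : P^e ⊗_{R^e} Q^e → S ⊗_k S^op` and `Ψ : Q^e ⊗_{S^e} P^e → R ⊗_k R^op` are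
well-defined bimodule isomorphisms (the maps on the `k`-tensor products are surjective with
kernel exactly the balancing relations, and are equivariant for the bimodule actions), and
satisfy `Φ(x ⊗ y)·x' = x·Ψ(y ⊗ x')` and `Ψ(y ⊗ x)·y' = y·Φ(x ⊗ y')`; hence
`(R ⊗_k R^op, S ⊗_k S^op, P^e, Q^e, Φ, Ψ)` is again a Morita context. -/
theorem enveloping_morita_context
    (k R S P Q : Type u) [CommRing k] [Ring R] [Ring S] [Algebra k R] [Algebra k S]
    [AddCommGroup P] [Module k P] [Module S P] [Module Rᵐᵒᵖ P]
    [SMulCommClass S Rᵐᵒᵖ P] [IsScalarTower k S P] [IsScalarTower k Rᵐᵒᵖ P]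
    [AddCommGroup Q] [Module k Q] [Module R Q] [Module Sᵐᵒᵖ Q]
    [SMulCommClass R Sᵐᵒᵖ Q] [IsScalarTower k R Q] [IsScalarTower k Sᵐᵒᵖ Q]
    (ctx : MoritaContext k R S P Q)
    -- the four bimodule actions on `P^e` and `Q^e`
    (lactSePe : (S ⊗[k] Sᵐᵒᵖ) →ₗ[k] (P ⊗[k] Q) →ₗ[k] (P ⊗[k] Q))
    (hlactSePe : ∀ (s s' : S) (p : P) (q : Q),
      lactSePe (s ⊗ₜ[k] op s') (p ⊗ₜ[k] q) = (s • p) ⊗ₜ[k] (op s' • q))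
    (ractRePe : (P ⊗[k] Q) →ₗ[k] (R ⊗[k] Rᵐᵒᵖ) →ₗ[k] (P ⊗[k] Q))
    (hractRePe : ∀ (r r' : R) (p : P) (q : Q),
      ractRePe (p ⊗ₜ[k] q) (r ⊗ₜ[k] op r') = (op r • p) ⊗ₜ[k] (r' • q))
    (lactReQe : (R ⊗[k] Rᵐᵒᵖ) →ₗ[k] (Q ⊗[k] P) →ₗ[k] (Q ⊗[k] P))
    (hlactReQe : ∀ (r r' : R) (q : Q) (p : P),
      lactReQe (r ⊗ₜ[k] op r') (q ⊗ₜ[k] p) = (r • q) ⊗ₜ[k] (op r' • p))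
    (ractSeQe : (Q ⊗[k] P) →ₗ[k] (S ⊗[k] Sᵐᵒᵖ) →ₗ[k] (Q ⊗[k] P))
    (hractSeQe : ∀ (s s' : S) (q : Q) (p : P),
      ractSeQe (q ⊗ₜ[k] p) (s ⊗ₜ[k] op s') = (op s • q) ⊗ₜ[k] (s' • p)) :
    -- `Φ` and `Ψ` descend to well-defined bijections on the balanced tensor products
    LinearMap.ker (PhiMap k ctx.φ) = relPeQe (k := k) (R := R) (P := P) (Q := Q) ∧
    Function.Surjective (PhiMap k ctx.φ) ∧
    LinearMap.ker (PhiMap k ctx.ψ) = relPeQe (k := k) (R := S) (P := Q) (Q := P) ∧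
    Function.Surjective (PhiMap k ctx.ψ) ∧
    -- `Φ` is a morphism of `(S^e, S^e)`-bimodules
    (∀ (se : S ⊗[k] Sᵐᵒᵖ) (x : P ⊗[k] Q) (y : Q ⊗[k] P),
      PhiMap k ctx.φ (lactSePe se x ⊗ₜ[k] y)
        = se * PhiMap k ctx.φ (x ⊗ₜ[k] y)) ∧
    (∀ (se : S ⊗[k] Sᵐᵒᵖ) (x : P ⊗[k] Q) (y : Q ⊗[k] P),
      PhiMap k ctx.φ (x ⊗ₜ[k] ractSeQe y se)
        = PhiMap k ctx.φ (x ⊗ₜ[k] y) * se) ∧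
    -- `Ψ` is a morphism of `(R^e, R^e)`-bimodules
    (∀ (re : R ⊗[k] Rᵐᵒᵖ) (y : Q ⊗[k] P) (x : P ⊗[k] Q),
      PhiMap k ctx.ψ (lactReQe re y ⊗ₜ[k] x)
        = re * PhiMap k ctx.ψ (y ⊗ₜ[k] x)) ∧
    (∀ (re : R ⊗[k] Rᵐᵒᵖ) (y : Q ⊗[k] P) (x : P ⊗[k] Q),
      PhiMap k ctx.ψ (y ⊗ₜ[k] ractRePe x re)
        = PhiMap k ctx.ψ (y ⊗ₜ[k] x) * re) ∧
    -- the Morita compatibility conditions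
    (∀ (x x' : P ⊗[k] Q) (y : Q ⊗[k] P),
      lactSePe (PhiMap k ctx.φ (x ⊗ₜ[k] y)) x'
        = ractRePe x (PhiMap k ctx.ψ (y ⊗ₜ[k] x'))) ∧
    (∀ (y y' : Q ⊗[k] P) (x : P ⊗[k] Q),
      lactReQe (PhiMap k ctx.ψ (y ⊗ₜ[k] x)) y'
        = ractSeQe y (PhiMap k ctx.φ (x ⊗ₜ[k] y'))) := by
  have L : ∀ (a : S ⊗[k] Sᵐᵒᵖ) (x : P ⊗[k] Q) (y : Q ⊗[k] P),
      PhiMap k ctx.φ (lactSePe a x ⊗ₜ[k] y) = a * PhiMap k ctx.φ (x ⊗ₜ[k] y) := by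
    intro a x y
    induction a with
    | zero => simp
    | add a b ha hb => simp only [map_add, LinearMap.add_apply, TensorProduct.add_tmul, add_mul, ha, hb]
    | tmul s t =>
    induction x with
    | zero => simp
    | add a b ha hb => simp only [map_add, TensorProduct.add_tmul, mul_add, ha, hb]
    | tmul p q =>
    induction y with
    | zero => simp
    | add a b ha hb => simp only [map_add, TensorProduct.tmul_add, mul_add, ha, hb]
    | tmul q' p' =>
    induction t with
    | h t => simp [hlactSePe, PhiMap_tmul, ctx.φ_left, ctx.φ_right]
  have L' : ∀ (a : S ⊗[k] Sᵐᵒᵖ) (x : P ⊗[k] Q) (y : Q ⊗[k] P),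
      PhiMap k ctx.φ (x ⊗ₜ[k] ractSeQe y a) = PhiMap k ctx.φ (x ⊗ₜ[k] y) * a := by
    intro a x y
    induction a with
    | zero => simp
    | add a b ha hb => simp only [map_add, TensorProduct.tmul_add, mul_add, ha, hb]
    | tmul s t =>
    induction x with
    | zero => simp
    | add a b ha hb => simp only [map_add, TensorProduct.add_tmul, add_mul, ha, hb]
    | tmul p q =>
    induction y with
    | zero => simp
    | add a b ha hb => simp only [map_add, LinearMap.add_apply, TensorProduct.tmul_add, add_mul, ha, hb]
    | tmul q' p' =>
    induction t with
    | h t => simp [hractSeQe, PhiMap_tmul, ctx.φ_left, ctx.φ_right]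
  have M : ∀ (a : R ⊗[k] Rᵐᵒᵖ) (x : Q ⊗[k] P) (y : P ⊗[k] Q),
      PhiMap k ctx.ψ (lactReQe a x ⊗ₜ[k] y) = a * PhiMap k ctx.ψ (x ⊗ₜ[k] y) := by
    intro a x y
    induction a with
    | zero => simp
    | add a b ha hb => simp only [map_add, LinearMap.add_apply, TensorProduct.add_tmul, add_mul, ha, hb]
    | tmul s t =>
    induction x with
    | zero => simp
    | add a b ha hb => simp only [map_add, TensorProduct.add_tmul, mul_add, ha, hb]
    | tmul p q =>
    induction y with
    | zero => simp
    | add a b ha hb => simp only [map_add, TensorProduct.tmul_add, mul_add, ha, hb]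
    | tmul q' p' =>
    induction t with
    | h t => simp [hlactReQe, PhiMap_tmul, ctx.ψ_left, ctx.ψ_right]
  have M' : ∀ (a : R ⊗[k] Rᵐᵒᵖ) (x : Q ⊗[k] P) (y : P ⊗[k] Q),
      PhiMap k ctx.ψ (x ⊗ₜ[k] ractRePe y a) = PhiMap k ctx.ψ (x ⊗ₜ[k] y) * a := by
    intro a x y
    induction a with
    | zero => simp
    | add a b ha hb => simp only [map_add, TensorProduct.tmul_add, mul_add, ha, hb]
    | tmul s t =>
    induction x with
    | zero => simp
    | add a b ha hb => simp only [map_add, TensorProduct.add_tmul, add_mul, ha, hb]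
    | tmul p q =>
    induction y with
    | zero => simp
    | add a b ha hb => simp only [map_add, LinearMap.add_apply, TensorProduct.tmul_add, add_mul, ha, hb]
    | tmul q' p' =>
    induction t with
    | h t => simp [hractRePe, PhiMap_tmul, ctx.ψ_left, ctx.ψ_right]
  refine ⟨PhiMap_ker k ctx.φ ctx.φ_surj ctx.φ_ker, PhiMap_surj k _ ctx.φ_surj,
    PhiMap_ker k ctx.ψ ctx.ψ_surj ctx.ψ_ker, PhiMap_surj k _ ctx.ψ_surj, L, L', M, M', ?_, ?_⟩
  · intro x x' y
    induction x with
    | zero => simp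
    | add a b ha hb => simp only [map_add, LinearMap.add_apply, TensorProduct.add_tmul, ha, hb]
    | tmul p q =>
    induction x' with
    | zero => simp
    | add a b ha hb => simp only [map_add, TensorProduct.tmul_add, ha, hb]
    | tmul p₁ q₁ =>
    induction y with
    | zero => simp
    | add a b ha hb =>
      simp only [map_add, LinearMap.add_apply, TensorProduct.add_tmul, TensorProduct.tmul_add, ha, hb]
    | tmul q₂ p₂ =>
      rw [PhiMap_tmul, PhiMap_tmul, hlactSePe, hractRePe, ctx.assoc_φψ, ctx.assoc_ψφ]
  · intro x x' y
    induction x with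
    | zero => simp
    | add a b ha hb => simp only [map_add, LinearMap.add_apply, TensorProduct.add_tmul, ha, hb]
    | tmul p q =>
    induction x' with
    | zero => simp
    | add a b ha hb => simp only [map_add, TensorProduct.tmul_add, ha, hb]
    | tmul p₁ q₁ =>
    induction y with
    | zero => simp
    | add a b ha hb =>
      simp only [map_add, LinearMap.add_apply, TensorProduct.add_tmul, TensorProduct.tmul_add, ha, hb]
    | tmul q₂ p₂ =>
      rw [PhiMap_tmul, PhiMap_tmul, hlactReQe, hractSeQe, ctx.assoc_ψφ, ctx.assoc_φψ]
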